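/- arXiv:2209.14588 — 2 statements merged into one kernel-verified Lean document; each statement's English description precedes it below -/
import Mathlib

section
/- (Lemma 4.2, case (3,5).) For all nonnegative integers r and s: if r + s = 14 and r ∉ {11, 12, 13}, then there exists a solution to HWP*(15; 3^r, 5^s); conversely, if a solution to HWP*(15; 3^r, 5^s) exists, then r + s = 14. -/
/-- A solution to the directed Hamilton–Waterloo problem HWP*(v; m^r, n^s):
a family of `r + s` permutations of `Fin v`, the first `r` of which are
fixed-point-free with all cycles of length `m` (i.e. every point has minimal
period `m`), the last `s` fixed-point-free with all cycles of length `n`,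
such that for every ordered pair of distinct vertices `(x, y)` there is exactly
one index `i` with `σ i x = y`. -/
def HWPStarSolution (v m n r s : ℕ) : Prop :=
  ∃ σ : Fin (r + s) → Equiv.Perm (Fin v),
    (∀ i : Fin (r + s), (i : ℕ) < r → ∀ x : Fin v, Function.minimalPeriod ⇑(σ i) x = m) ∧
    (∀ i : Fin (r + s), r ≤ (i : ℕ) → ∀ x : Fin v, Function.minimalPeriod ⇑(σ i) x = n) ∧
    (∀ x y : Fin v, x ≠ y → ∃! i : Fin (r + s), σ i x = y)

/-- The entry number `x` of row `i` of the table encoded by `N` in base 15. -/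
def hwTab (N i x : ℕ) : ℕ := N / 15 ^ (15 * i + x) % 15

/-- Row `i` of the table as a self-map of `Fin 15`. -/
def hwFun (N i : ℕ) (x : Fin 15) : Fin 15 :=
  ⟨hwTab N i x, Nat.mod_lt _ (by norm_num)⟩

/-- Boolean verification of a table. -/
def hwOk (N r : ℕ) : Bool :=
  ((List.range 14).all fun i => (List.range 15).all fun x =>
    let t := hwTab N i
    !(t x == x) && (if i < r then t (t (t x)) == x else t (t (t (t (t x)))) == x)) &&
  ((List.range 15).all fun x => (List.range 15).all fun y =>
    x == y || (((List.range 14).filter fun i => hwTab N i x == y).length == 1))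

theorem hwSol_of_ok (N r s : ℕ) (hrs : r + s = 14) (h : hwOk N r = true) :
    HWPStarSolution 15 3 5 r s := by
  simp only [hwOk, Bool.and_eq_true, List.all_eq_true, List.mem_range, Bool.or_eq_true,
    beq_iff_eq, Bool.not_eq_true', beq_eq_false_iff_ne] at h
  obtain ⟨h1, h2⟩ := h
  have hfix : ∀ i < 14, ∀ x, hwFun N i x ≠ x := fun i hi x e =>
    (h1 i hi x x.2).1 (congrArg Fin.val e)
  have h3 : ∀ i < 14, i < r → ∀ x, (hwFun N i)^[3] x = x := by
    intro i hi hr x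
    have := (h1 i hi x x.2).2
    rw [if_pos hr, beq_iff_eq] at this
    exact Fin.ext this
  have h5 : ∀ i < 14, r ≤ i → ∀ x, (hwFun N i)^[5] x = x := by
    intro i hi hr x
    have := (h1 i hi x x.2).2
    rw [if_neg (by omega), beq_iff_eq] at this
    exact Fin.ext this
  have hinj : ∀ i < 14, Function.Injective (hwFun N i) := by
    intro i hi
    rcases lt_or_ge i r with hr | hr
    · have e : (hwFun N i)^[3] = id := funext (h3 i hi hr)
      have : Function.Injective (hwFun N i)^[3] := e ▸ Function.injective_id
      rw [Function.iterate_succ] at this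
      exact this.of_comp
    · have e : (hwFun N i)^[5] = id := funext (h5 i hi hr)
      have : Function.Injective (hwFun N i)^[5] := e ▸ Function.injective_id
      rw [Function.iterate_succ] at this
      exact this.of_comp
  have hlt : ∀ i : Fin (r + s), (i : ℕ) < 14 := fun i => hrs ▸ i.2
  refine ⟨fun i => Equiv.ofBijective (hwFun N i)
    (Finite.injective_iff_bijective.1 (hinj i (hlt i))), ?_, ?_, ?_⟩
  · intro i hi x
    have : Fact (Nat.Prime 3) := ⟨by norm_num⟩
    exact Function.minimalPeriod_eq_prime (h3 i (hlt i) hi x) (hfix i (hlt i) x)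
  · intro i hi x
    have : Fact (Nat.Prime 5) := ⟨by norm_num⟩
    exact Function.minimalPeriod_eq_prime (h5 i (hlt i) hi x) (hfix i (hlt i) x)
  · intro x y hxy
    have := (h2 x x.2 y y.2).resolve_left (fun e => hxy (Fin.ext e))
    obtain ⟨a, ha⟩ := List.length_eq_one_iff.1 this
    have key : ∀ i, (i < 14 ∧ hwTab N i x = y) ↔ i = a := by
      intro i
      rw [← List.mem_singleton (a := i) (b := a), ← ha]
      simp
    obtain ⟨ha1, ha2⟩ := (key a).2 rfl
    refine ⟨⟨a, hrs.symm ▸ ha1⟩, Fin.ext ha2, ?_⟩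
    intro j hj
    exact Fin.ext ((key j).1 ⟨hlt j, congrArg Fin.val hj⟩)

theorem hwCount (r s : ℕ) (h : HWPStarSolution 15 3 5 r s) : r + s = 14 := by
  obtain ⟨σ, h3, h5, hu⟩ := h
  have hne : ∀ i, σ i 0 ≠ 0 := by
    intro i e
    have h1 : Function.minimalPeriod (σ i) 0 = 1 :=
      Function.minimalPeriod_eq_one_iff_isFixedPt.2 e
    rcases lt_or_ge (i : ℕ) r with hr | hr
    · have := h3 i hr 0
      omega
    · have := h5 i hr 0
      omega
  have hb : Function.Bijective
      (fun i : Fin (r + s) => (⟨σ i 0, hne i⟩ : {y : Fin 15 // y ≠ 0})) := by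
    constructor
    · intro i j hij
      exact (hu 0 (σ j 0) (hne j).symm).unique (congrArg Subtype.val hij) rfl
    · rintro ⟨y, hy⟩
      obtain ⟨i, hi, -⟩ := hu 0 y hy.symm
      exact ⟨i, Subtype.ext hi⟩
  have := Fintype.card_of_bijective hb
  simpa using this

theorem hwOk0 : hwOk
    5164643905138200965398694496161104431171884769451931006470247018814812336187803214066791137294101073205048934052912531102890944226043870256724604323861201459602454387934561213066383731563388840584906592639823633225954809399503025234973367379878376
    0 = true := by
  decide +kernel

theorem hwOk1 : hwOk
    8122290981308933313553905421686745417721213891260954841495272764159564266904540488750356921405165122128121182483940491884027180769703423368755654900859737017931141870450546318300412876609227280743946160776910310631608306871010235319771315266920684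
    1 = true := by
  decide +kernel

theorem hwOk2 : hwOk
    6986571142064908189091312644042320036574950239053811995445297249784137288746243910094792981462946537650703318447207363694811873895428432162757332420838477062668138888778926491373036717220576888031471848282986061591238024728880313780739058001747768
    2 = true := by
  decide +kernel

theorem hwOk3 : hwOk
    6986572637659901859754152270665462515561937216992095138095400286212486927489743963642555012667625438269782746748271468888861279532105643188016101493406451485858179459524012313898697428100001822432883936936736782115883261789013681526374981614522768
    3 = true := by
  decide +kernel

theorem hwOk4 : hwOk
    990985695150972321995812563005021738025284733238503585889119645107578813326963966120447601193351771025279053604673763937877197505974690704974547001459057230540277290468792309427327154193811723654193212860604614796584383915856031961888423345301264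
    4 = true := by
  decide +kernel

theorem hwOk5 : hwOk
    4032965332116437780891418081660816801020457916011429626799874189784674965496888639760025371276286491660620033732925535802176107394677639085948959107100252300661282228391143137387100606503939761801020163634285293775932385288192300604394159565312756
    5 = true := by
  decide +kernel

theorem hwOk6 : hwOk
    6986571142068056719912784742184240013132080733381892025657123218387214976162292574283684884600070970620909621987419096812249850975559101173981545477178275078622014501674377072212549708152405018121831405427409151050297923410949265820552134116935636
    6 = true := by
  decide +kernel

theorem hwOk7 : hwOk
    5884215249004298218730435590986448023105242200614949689758388860198624152614767237608386394917554825155133707887751318841734602480542068694424857663468446808019861144375291364782381675921563442391132888089970989218900944840072796622003394270072312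
    7 = true := by
  decide +kernel

theorem hwOk8 : hwOk
    8802173287796027135439114035968285771092203509219416279412382672298217382760622017673920503317133032045144437081574111687881861528660743762478220667679860692478695000092400231762132743346332850199099267540255180045313508400803265334084718116043336
    8 = true := by
  decide +kernel

theorem hwOk9 : hwOk
    7769089111657288382717978742000388395704603403266113770066831526893482224885351451129586574959394871420769810567341195142067007851335948200868021455477492373954549953928756650426154027637262548407942508051533895934350329781811040265243312329120744
    9 = true := by
  decide +kernel

theorem hwOk10 : hwOk
    8122290981307754293618184889694720205548724189709443862888604440383791760271122042431955233904997223737592921643449734119658524747527287776375309262542404985695244119707785160397445577009338485817708467013345932653116897258536320557284058389241376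
    10 = true := by
  decide +kernel

theorem hwOk14 : hwOk
    4705689859811414453259271456250308510937991375334085556702325448330209405697311924058183602734623084830514886645014758131168475134342067049903099011167059497331303413454912302302905477323338187226554202083819554739831001746542351298366069541475836
    14 = true := by
  decide +kernel

/-- Lemma 4.2, case (3,5): if r + s = 14 and r ∉ {11, 12, 13} then
HWP*(15; 3^r, 5^s) has a solution; conversely any solution forces r + s = 14. -/
theorem hwpStar_15_3_5 (r s : ℕ) :
    (r + s = 14 ∧ r ∉ ({11, 12, 13} : Set ℕ) → HWPStarSolution 15 3 5 r s) ∧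
    (HWPStarSolution 15 3 5 r s → r + s = 14) := by
  refine ⟨?_, hwCount r s⟩
  rintro ⟨hrs, hr⟩
  simp only [Set.mem_insert_iff, Set.mem_singleton_iff, not_or] at hr
  have hle : r ≤ 14 := by omega
  interval_cases r
  · exact hwSol_of_ok _ _ _ hrs hwOk0
  · exact hwSol_of_ok _ _ _ hrs hwOk1
  · exact hwSol_of_ok _ _ _ hrs hwOk2
  · exact hwSol_of_ok _ _ _ hrs hwOk3
  · exact hwSol_of_ok _ _ _ hrs hwOk4
  · exact hwSol_of_ok _ _ _ hrs hwOk5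
  · exact hwSol_of_ok _ _ _ hrs hwOk6
  · exact hwSol_of_ok _ _ _ hrs hwOk7
  · exact hwSol_of_ok _ _ _ hrs hwOk8
  · exact hwSol_of_ok _ _ _ hrs hwOk9
  · exact hwSol_of_ok _ _ _ hrs hwOk10
  · omega
  · omega
  · omega
  · exact hwSol_of_ok _ _ _ hrs hwOk14
end

section
/- (Theorem 4.3, sufficiency.) Let v be an odd integer with v > 15 and 15 ∣ v, and let (m, n) be one of the pairs (3,5), (3,15), (5,15). Then for all nonnegative integers r, s with r + s = v − 1, there exists a solution to HWP*(v; m^r, n^s). -/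
namespace HW
open Function

def Good (V : Type) (m n r s : ℕ) : Prop :=
  ∃ σ : Fin r ⊕ Fin s → V → V,
    (∀ i x, minimalPeriod (σ (.inl i)) x = m) ∧ (∀ i x, minimalPeriod (σ (.inr i)) x = n) ∧
    ∀ x y, x ≠ y → ∃! i, σ i x = y

theorem Good.swap {V : Type} {m n r s : ℕ} (h : Good V m n r s) : Good V n m s r := by
  obtain ⟨σ, h1, h2, h3⟩ := h
  refine ⟨fun i => σ i.swap, fun i x => h2 i x, fun i x => h1 i x, fun x y hxy => ?_⟩
  obtain ⟨i, hi, hu⟩ := h3 x y hxy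
  refine ⟨i.swap, by simpa using hi, fun j hj => ?_⟩
  rw [← hu _ hj]; simp

theorem Good.ofEquiv {V I J : Type} {m n r s : ℕ} (e : Fin r ⊕ Fin s ≃ I ⊕ J)
    (he : ∀ i, (e (.inl i)).isLeft) (he' : ∀ i, (e (.inr i)).isRight)
    (σ : I ⊕ J → V → V) (h1 : ∀ i x, minimalPeriod (σ (.inl i)) x = m)
    (h2 : ∀ i x, minimalPeriod (σ (.inr i)) x = n)
    (h3 : ∀ x y, x ≠ y → ∃! i, σ i x = y) : Good V m n r s := by
  refine ⟨fun i => σ (e i), fun i x => ?_, fun i x => ?_, fun x y hxy => ?_⟩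
  · obtain ⟨k, hk⟩ := Sum.isLeft_iff.1 (he i)
    simp only [hk, h1]
  · obtain ⟨k, hk⟩ := Sum.isRight_iff.1 (he' i)
    simp only [hk, h2]
  · exact (e.bijective.existsUnique_iff (p := fun i => σ i x = y)).1 (h3 x y hxy)

theorem Good.ofBool {V I : Type} [Fintype I] {m n r s : ℕ} (b : I → Bool) (σ : I → V → V)
    (h1 : ∀ i x, minimalPeriod (σ i) x = bif b i then m else n)
    (h3 : ∀ x y, x ≠ y → ∃! i, σ i x = y)
    (hr : Fintype.card {i // b i = true} = r) (hs : Fintype.card {i // ¬ b i = true} = s) :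
    Good V m n r s := by
  have e1 := (Fintype.equivFinOfCardEq hr).symm
  have e2 := (Fintype.equivFinOfCardEq hs).symm
  let e : {i // b i = true} ⊕ {i // ¬ b i = true} ≃ I := Equiv.sumCompl _
  refine Good.ofEquiv (Equiv.sumCongr e1 e2) (by simp) (by simp) (fun i => σ (e i))
    (fun i x => ?_) (fun i x => ?_) (fun x y hxy => ?_)
  · simp [e, h1, i.2]
  · have := i.2
    simp only [Bool.not_eq_true] at this
    simp [e, h1, this]
  · exact (e.bijective.existsUnique_iff (p := fun i => σ i x = y)).1 (h3 x y hxy)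

theorem minimalPeriod_conj {V W : Type} (e : V ≃ W) (f : V → V) (y : W) :
    minimalPeriod (fun y => e (f (e.symm y))) y = minimalPeriod f (e.symm y) := by
  have hit : ∀ j, (fun y => e (f (e.symm y)))^[j] y = e (f^[j] (e.symm y)) := by
    intro j
    induction j with
    | zero => simp
    | succ j ih => rw [iterate_succ_apply', ih, iterate_succ_apply']; simp
  rw [minimalPeriod_eq_minimalPeriod_iff]
  intro j
  simp only [IsPeriodicPt, IsFixedPt, hit]
  constructor
  · intro h; exact e.eq_symm_apply.2 h
  · intro h; simp [h]

theorem Good.congr {V W : Type} (e : V ≃ W) {m n r s : ℕ} (h : Good V m n r s) :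
    Good W m n r s := by
  obtain ⟨σ, h1, h2, h3⟩ := h
  refine ⟨fun i y => e (σ i (e.symm y)), fun i x => ?_, fun i x => ?_, fun x y hxy => ?_⟩
  · rw [minimalPeriod_conj, h1]
  · rw [minimalPeriod_conj, h2]
  · have := h3 (e.symm x) (e.symm y) (by simpa using hxy)
    simpa [Equiv.eq_symm_apply] using this

theorem inj_of_period {V : Type} {f : V → V} {m : ℕ} (hm : 0 < m)
    (h : ∀ x, minimalPeriod f x = m) : Injective f := by
  intro x y hxy
  have hx : ∀ x, f^[m-1] (f x) = x := by
    intro x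
    rw [← iterate_succ_apply, Nat.succ_eq_add_one, Nat.sub_add_cancel hm, ← h x]
    exact isPeriodicPt_minimalPeriod f x
  rw [← hx x, hxy, hx]

end HW

namespace HW
open Function
theorem Good.toHWP {v m n r s : ℕ} (hm : 0 < m) (hn : 0 < n) (h : Good (Fin v) m n r s) :
    HWPStarSolution v m n r s := by
  obtain ⟨σ, h1, h2, h3⟩ := h
  have hinj : ∀ i, Injective (σ i) := by
    rintro (i | i)
    · exact inj_of_period hm (h1 i)
    · exact inj_of_period hn (h2 i)
  refine ⟨fun i => Equiv.ofBijective (σ (finSumFinEquiv.symm i))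
    (Finite.injective_iff_bijective.1 (hinj _)), fun i hi x => ?_, fun i hi x => ?_,
    fun x y hxy => ?_⟩
  · obtain ⟨j, rfl⟩ := finSumFinEquiv.surjective i
    rcases j with j | j
    · simpa using h1 j x
    · simp at hi
  · obtain ⟨j, rfl⟩ := finSumFinEquiv.surjective i
    rcases j with j | j
    · simp at hi; omega
    · simpa using h2 j x
  · exact (finSumFinEquiv.symm.bijective.existsUnique_iff (p := fun i => σ i x = y)).1 (h3 x y hxy)
end HW
namespace HW
open Function

def csum {F : Type} (π : F → F) (l : F → ℤ) : ℕ → F → ℤ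
  | 0, _ => 0
  | n + 1, f => l f + csum π l n (π f)

/-- a lift of `π` to `A × F` by labels -/
def lft {A F : Type} [CommRing A] (π : F → F) (l : F → ℤ) (d : A) (p : A × F) : A × F :=
  (p.1 + (l p.2 : A) * d, π p.2)

theorem lft_iterate {A F : Type} [CommRing A] (π : F → F) (l : F → ℤ) (d : A) (j : ℕ) :
    ∀ p : A × F, (lft π l d)^[j] p = (p.1 + (csum π l j p.2 : A) * d, π^[j] p.2) := by
  induction j with
  | zero => intro p; simp [csum]
  | succ j ih =>
    intro p
    rw [iterate_succ_apply, ih, iterate_succ_apply]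
    simp only [lft, csum, Prod.mk.injEq, and_true]
    push_cast
    ring

theorem lft_period {A F : Type} [CommRing A] (π : F → F) (l : F → ℤ) (d : A) (m : ℕ)
    (hp : ∀ f, minimalPeriod π f = m) (hl : ∀ f, csum π l m f = 0) (p : A × F) :
    minimalPeriod (lft π l d) p = m := by
  apply Nat.dvd_antisymm
  · apply IsPeriodicPt.minimalPeriod_dvd
    rw [IsPeriodicPt, IsFixedPt, lft_iterate, hl]
    have : π^[m] p.2 = p.2 := by rw [← hp p.2]; exact isPeriodicPt_minimalPeriod _ _
    simp [this]
  · have := (isPeriodicPt_minimalPeriod (lft π l d) p).map (g := Prod.snd) (fb := π)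
      (fun _ => rfl)
    rw [← hp p.2]
    exact this.minimalPeriod_dvd

/-- blow-up step -/
theorem blow {A F G B : Type} [CommRing A] [Fintype A] (E : F ≃ G × B)
    {m n r' s' N : ℕ} (a : ℕ) (π : Fin N → F → F) (b : Fin N → Bool) (l : Fin N → F → ℤ)
    (hb : Fintype.card {i // b i = true} = a)
    (hper : ∀ i f, minimalPeriod (π i) f = bif b i then m else n)
    (hsum : ∀ i f, csum (π i) (l i) (bif b i then m else n) f = 0)
    (hun : ∀ i f, IsUnit ((l i f : ℤ) : A))
    (hD : ∀ i f, (E f).1 ≠ (E (π i f)).1)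
    (hU : ∀ f g, (E f).1 ≠ (E g).1 → ∃! i, π i f = g)
    (hG : Good (A × B) m n r' s') :
    Good (A × F) m n (Fintype.card A * a + r') (Fintype.card A * (N - a) + s') := by
  classical
  obtain ⟨ρ, h1, h2, h3⟩ := hG
  let σ : (A × Fin N) ⊕ (Fin r' ⊕ Fin s') → A × F → A × F := Sum.elim
    (fun q => lft (π q.2) (l q.2) q.1)
    (fun i p => ((ρ i (p.1, (E p.2).2)).1, E.symm ((E p.2).1, (ρ i (p.1, (E p.2).2)).2)))
  let β : (A × Fin N) ⊕ (Fin r' ⊕ Fin s') → Bool := Sum.elim (fun q => b q.2) Sum.isLeft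
  have hit : ∀ i j (p : A × F), (σ (.inr i))^[j] p =
      (((ρ i)^[j] (p.1, (E p.2).2)).1, E.symm ((E p.2).1, ((ρ i)^[j] (p.1, (E p.2).2)).2)) := by
    intro i j p
    induction j with
    | zero => simp
    | succ j ih =>
      rw [iterate_succ_apply', ih, iterate_succ_apply']
      simp [σ]
  have hmp : ∀ i (p : A × F), minimalPeriod (σ (.inr i)) p =
      minimalPeriod (ρ i) (p.1, (E p.2).2) := by
    intro i p
    rw [minimalPeriod_eq_minimalPeriod_iff]
    intro j
    simp only [IsPeriodicPt, IsFixedPt, hit]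
    constructor
    · intro h
      have ha := congrArg Prod.fst h
      have hb := congrArg (fun q : A × F => (E q.2).2) h
      simp only [Equiv.apply_symm_apply] at ha hb
      exact Prod.ext ha hb
    · intro h
      rw [h]; simp
  have hbn : Fintype.card {i // ¬ b i = true} = N - a := by
    rw [Fintype.card_subtype_compl, hb]; simp
  refine Good.ofBool β σ ?_ ?_ ?_ ?_
  · rintro (⟨d, i⟩ | i) p
    · exact lft_period _ _ _ _ (hper i) (hsum i) p
    · rw [hmp]
      rcases i with i | i
      · simp [h1, β]
      · simp [h2, β]
  · rintro ⟨x, f⟩ ⟨y, g⟩ hne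
    by_cases hfg : (E f).1 = (E g).1
    · have hne' : (x, (E f).2) ≠ (y, (E g).2) := by
        intro h
        simp only [Prod.mk.injEq] at h
        exact hne (by rw [h.1, E.injective (Prod.ext hfg h.2)])
      obtain ⟨i, hi, hu⟩ := h3 _ _ hne'
      refine ⟨.inr i, ?_, ?_⟩
      · simp only [σ, Sum.elim_inr, hi, hfg]; simp
      · rintro (⟨d, i'⟩ | i') hh
        · exfalso
          simp only [σ, Sum.elim_inl, lft, Prod.mk.injEq] at hh
          exact hD i' f (by rw [hh.2, hfg])
        · congr 1
          apply hu
          simp only [σ, Sum.elim_inr, Prod.mk.injEq] at hh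
          refine Prod.ext hh.1 ?_
          have := congrArg E hh.2
          simp only [Equiv.apply_symm_apply] at this
          have hh2 := congrArg Prod.snd this
          exact hh2
    · obtain ⟨i, hi, hu⟩ := hU f g hfg
      obtain ⟨u, hu1⟩ := hun i f
      refine ⟨.inl (↑u⁻¹ * (y - x), i), ?_, ?_⟩
      · simp [σ, lft, hi, ← hu1]
      · rintro (⟨d, i'⟩ | i') hh
        · simp only [σ, Sum.elim_inl, lft, Prod.mk.injEq] at hh
          obtain rfl := hu i' hh.2
          have : d = ↑u⁻¹ * (y - x) := by
            rw [← hh.1, ← hu1]; simp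
          rw [this]
        · exfalso
          simp only [σ, Sum.elim_inr, Prod.mk.injEq] at hh
          apply hfg
          rw [← hh.2]; simp
  · rw [Fintype.card_congr (Equiv.subtypeSum), Fintype.card_sum]
    congr 1
    · rw [← hb, ← Fintype.card_prod]
      exact Fintype.card_congr
        ⟨fun q => (q.1.1, ⟨q.1.2, q.2⟩), fun q => ⟨(q.1, q.2.1), q.2.2⟩, fun _ => rfl, fun _ => rfl⟩
    · refine Eq.trans (Fintype.card_congr (β := Fin r') ?_) (Fintype.card_fin r')
      exact
        ⟨fun q => q.1.getLeft q.2, fun q => ⟨.inl q, rfl⟩, by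
          rintro ⟨(i | i), h⟩
          · rfl
          · simp [β] at h, fun _ => rfl⟩
  · rw [Fintype.card_congr (Equiv.subtypeSum), Fintype.card_sum]
    congr 1
    · rw [← hbn, ← Fintype.card_prod]
      exact Fintype.card_congr
        ⟨fun q => (q.1.1, ⟨q.1.2, q.2⟩), fun q => ⟨(q.1, q.2.1), q.2.2⟩, fun _ => rfl, fun _ => rfl⟩
    · refine Eq.trans (Fintype.card_congr (β := Fin s') ?_) (Fintype.card_fin s')
      exact
        ⟨fun q => q.1.getRight (by have := q.2; simpa [β] using this),
          fun q => ⟨.inr q, by simp [β]⟩, by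
          rintro ⟨(i | i), h⟩
          · simp [β] at h
          · rfl, fun _ => rfl⟩
end HW

namespace HW
open Function

def sv {A : Type} [CommRing A] (s : Bool) : A := bif s then -1 else 1

theorem sv_mul {A : Type} [CommRing A] (s : Bool) : (sv s : A) * sv s = 1 := by
  cases s <;> simp [sv]

section
variable {A F : Type} [CommRing A] [DecidableEq A]

/-- base factor -/
def bas (sg : A → Bool) (P : F × Bool → F × Bool) (c : F → Aˣ) (τ : F → F) (ε : Bool) (e : A)
    (p : A × F) : A × F :=
  if p.1 = e then (e, τ p.2) else
    (e + sv (P (p.2, xor (sg (↑(c p.2)⁻¹ * (p.1 - e))) ε)).2 *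
      c (P (p.2, xor (sg (↑(c p.2)⁻¹ * (p.1 - e))) ε)).1 *
      (sv (xor (sg (↑(c p.2)⁻¹ * (p.1 - e))) ε) * (↑(c p.2)⁻¹ * (p.1 - e))),
     (P (p.2, xor (sg (↑(c p.2)⁻¹ * (p.1 - e))) ε)).1)

/-- the point of `A × F` given by a symbolic half point -/
def pnt (c : F → Aˣ) (e h : A) (q : F × Bool) : A × F := (e + sv q.2 * c q.1 * h, q.1)

theorem sv_ne {c : F → Aˣ} {h : A} (hh : h ≠ 0) (q : F × Bool) :
    (sv q.2 : A) * c q.1 * h ≠ 0 := by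
  rcases q with ⟨f, s⟩
  cases s <;> simpa [sv] using hh

theorem pnt_surj (sg : A → Bool) (hsg : ∀ z, z ≠ 0 → sg (-z) = !sg z) (c : F → Aˣ)
    (ε : Bool) (e x : A) (f : F) (hx : x ≠ e) :
    ∃ h s, h ≠ 0 ∧ sg h = ε ∧ (x, f) = pnt c e h (f, s) := by
  have hz : ((↑(c f)⁻¹ : A) * (x - e)) ≠ 0 := by
    simpa [sub_eq_zero] using hx
  refine ⟨sv (xor (sg (↑(c f)⁻¹ * (x - e))) ε) * (↑(c f)⁻¹ * (x - e)),
    xor (sg (↑(c f)⁻¹ * (x - e))) ε, ?_, ?_, ?_⟩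
  · cases (xor (sg (↑(c f)⁻¹ * (x - e))) ε) <;> simpa [sv, sub_eq_zero] using hx
  · have := hsg _ hz
    cases h1 : sg (↑(c f)⁻¹ * (x - e)) <;> cases ε <;> simp_all [sv]
  · simp only [pnt, Prod.mk.injEq, and_true]
    have h1 := sv_mul (A := A) (xor (sg (↑(c f)⁻¹ * (x - e))) ε)
    calc x = e + ((c f : A) * ↑(c f)⁻¹) * (x - e) := by simp
      _ = _ := by linear_combination (-((c f : A) * ↑(c f)⁻¹) * (x - e)) * h1

theorem bas_pnt (sg : A → Bool) (hsg : ∀ z, z ≠ 0 → sg (-z) = !sg z) (P : F × Bool → F × Bool)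
    (c : F → Aˣ) (τ : F → F) (e h : A) (hh : h ≠ 0) (q : F × Bool) :
    bas sg P c τ (sg h) e (pnt c e h q) = pnt c e h (P q) := by
  have hne := sv_ne (c := c) hh q
  have hz : ((↑(c q.1)⁻¹ : A) * ((pnt c e h q).1 - e)) = sv q.2 * h := by
    simp only [pnt, add_sub_cancel_left]
    linear_combination (sv q.2 * h) * (c q.1).inv_mul
  have hs : xor (sg (sv q.2 * h)) (sg h) = q.2 := by
    rcases q with ⟨f, s⟩
    have := hsg h hh
    cases s <;> simp [sv, this]
  have h0 : ¬ (pnt c e h q).1 = e := by simpa [pnt] using hne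
  have h2 : (pnt c e h q).2 = q.1 := rfl
  have h1 := sv_mul (A := A) q.2
  rw [bas, if_neg h0, h2, hz, hs]
  simp only [pnt, Prod.mk.injEq, and_true, Prod.mk.eta]
  linear_combination (sv (P q).2 * (c (P q).1 : A) * h) * h1

theorem bas_period (sg : A → Bool) (hsg : ∀ z, z ≠ 0 → sg (-z) = !sg z)
    (h2 : IsUnit (2 : A)) (P : F × Bool → F × Bool)
    (c : F → Aˣ) (τ : F → F) (ε : Bool) (e : A) (m : ℕ) (hP : ∀ q, minimalPeriod P q = m)
    (hτ : ∀ f, minimalPeriod τ f = m) (p : A × F) :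
    minimalPeriod (bas sg P c τ ε e) p = m := by
  obtain ⟨x, f⟩ := p
  by_cases hx : x = e
  · subst hx
    have hit : ∀ j, (bas sg P c τ ε x)^[j] (x, f) = (x, τ^[j] f) := by
      intro j
      induction j with
      | zero => rfl
      | succ j ih => rw [iterate_succ_apply', ih, iterate_succ_apply']; simp [bas]
    rw [← hτ f, minimalPeriod_eq_minimalPeriod_iff]
    intro j
    simp [IsPeriodicPt, IsFixedPt, hit]
  · obtain ⟨h, s, hh, rfl, hp⟩ := pnt_surj sg hsg c ε e x f hx
    rw [hp]
    have hit : ∀ j, (bas sg P c τ (sg h) e)^[j] (pnt c e h (f, s)) = pnt c e h (P^[j] (f, s)) := by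
      intro j
      induction j with
      | zero => rfl
      | succ j ih => rw [iterate_succ_apply', ih, iterate_succ_apply', bas_pnt sg hsg _ _ _ _ _ hh]
    rw [← hP (f, s), minimalPeriod_eq_minimalPeriod_iff]
    intro j
    simp only [IsPeriodicPt, IsFixedPt, hit]
    constructor
    · intro hj
      generalize P^[j] (f, s) = q at hj
      obtain ⟨g, t⟩ := q
      simp only [pnt, Prod.mk.injEq] at hj
      obtain ⟨hj, rfl⟩ := hj
      have h2' : ∀ z : A, (2 : A) * z = 0 → z = 0 := fun z hz => (h2.mul_right_eq_zero).1 hz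
      have hc : (c g : A) * h ≠ 0 := by simpa using hh
      cases s <;> cases t <;> simp only [sv, cond_true, cond_false] at hj ⊢
      · exact absurd (h2' _ (by linear_combination -hj)) hc
      · exact absurd (h2' _ (by linear_combination hj)) hc
    · intro hj; rw [hj]

end

theorem main_step {A F K : Type} [CommRing A] [Fintype A] [DecidableEq A] [Fintype K]
    {m n r s N : ℕ} (sg : A → Bool) (hsg : ∀ z, z ≠ 0 → sg (-z) = !sg z) (h2 : IsUnit (2 : A))
    (R : F → F → Prop)
    (τ : (Fin 2 × Bool) ⊕ K → F → F) (bk : K → Bool)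
    (hτ0 : ∀ q f, minimalPeriod (τ (.inl q)) f = m)
    (hτ1 : ∀ q f, minimalPeriod (τ (.inr q)) f = bif bk q then m else n)
    (hτ : ∀ f g, f ≠ g → ∃! i, τ i f = g)
    (t : A → Bool) (lab : F → F → ℤ) (hlab : ∀ f g, R f g → IsUnit ((lab f g : ℤ) : A))
    (π : Bool → Fin N → F → F)
    (hπ1 : ∀ b i f, minimalPeriod (π b i) f = bif b then m else n)
    (hπs : ∀ b i f, csum (π b i) (fun f => lab f (π b i f)) (bif b then m else n) f = 0)
    (hπ2 : ∀ b i f, R f (π b i f))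
    (hπ3 : ∀ b f g, R f g → ∃! i, π b i f = g)
    (P : Fin 2 → F × Bool → F × Bool) (c : Fin 2 → F → Aˣ)
    (hP1 : ∀ i q, minimalPeriod (P i) q = m)
    (hPu : ∀ i q, IsUnit ((sv (P i q).2 : A) * c i (P i q).1 - sv q.2 * c i q.1))
    (hP2 : ∀ i q, ¬ R q.1 (P i q).1)
    (hP3 : ∀ f g, ¬ R f g → ∃! w : Fin 2 × Bool, (P w.1 (f, w.2)).1 = g)
    (hr : N * Fintype.card {d : A // d ≠ 0 ∧ t d = true} +
      (4 * Fintype.card A + Fintype.card {k // bk k = true}) = r)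
    (hs : N * Fintype.card {d : A // d ≠ 0 ∧ ¬ t d = true} + Fintype.card {k // ¬ bk k = true} = s) :
    Good (A × F) m n r s := by
  classical
  let σ : (Fin N × {d : A // d ≠ 0}) ⊕ (((Fin 2 × Bool) × A) ⊕ K) → A × F → A × F :=
    Sum.elim (fun q => lft (π (t q.2.1) q.1) (fun f => lab f (π (t q.2.1) q.1 f)) q.2.1)
      (Sum.elim (fun q => bas sg (P q.1.1) (c q.1.1) (τ (.inl q.1)) q.1.2 q.2)
        (fun k p => (p.1, τ (.inr k) p.2)))
  let β : (Fin N × {d : A // d ≠ 0}) ⊕ (((Fin 2 × Bool) × A) ⊕ K) → Bool :=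
    Sum.elim (fun q => t q.2.1) (Sum.elim (fun _ => true) bk)
  -- a description of the base arcs
  have hbas : ∀ (w : Fin 2 × Bool) (e x : A) (f : F), x ≠ e → ∃ h s, h ≠ 0 ∧ sg h = w.2 ∧
      x = e + sv s * c w.1 f * h ∧
      bas sg (P w.1) (c w.1) (τ (.inl w)) w.2 e (x, f) =
        (x + (sv (P w.1 (f, s)).2 * c w.1 (P w.1 (f, s)).1 - sv s * c w.1 f) * h,
          (P w.1 (f, s)).1) := by
    intro w e x f hx
    obtain ⟨h, s, hh, he, hp⟩ := pnt_surj sg hsg (c w.1) w.2 e x f hx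
    have hx' : x = e + sv s * c w.1 f * h := congrArg Prod.fst hp
    refine ⟨h, s, hh, he, hx', ?_⟩
    rw [hp, ← he, bas_pnt sg hsg _ _ _ _ _ hh]
    simp only [pnt, Prod.mk.injEq, and_true]
    rw [hx']; ring
  refine Good.ofBool β σ ?_ ?_ ?_ ?_
  · rintro (⟨i, d⟩ | q | k) p
    · exact lft_period _ _ _ _ (hπ1 _ i) (hπs _ i) p
    · exact bas_period sg hsg h2 _ _ _ _ _ m (hP1 _) (hτ0 _) p
    · simp only [σ, β, Sum.elim_inr]
      rw [← hτ1 k p.2, minimalPeriod_eq_minimalPeriod_iff]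
      intro j
      have hit : ∀ j, (fun p : A × F => (p.1, τ (.inr k) p.2))^[j] p =
          (p.1, (τ (.inr k))^[j] p.2) := by
        intro j
        induction j with
        | zero => rfl
        | succ j ih => rw [iterate_succ_apply', ih, iterate_succ_apply']
      simp only [IsPeriodicPt, IsFixedPt, hit]
      constructor
      · intro h; exact congrArg Prod.snd h
      · intro h; rw [h]
  · rintro ⟨x, f⟩ ⟨y, g⟩ hne
    by_cases hxy : x = y
    · subst hxy
      have hfg : f ≠ g := fun h => hne (by rw [h])
      obtain ⟨i, hi, hu⟩ := hτ f g hfg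
      have hno1 : ∀ q, ¬ σ (.inl q) (x, f) = (x, g) := by
        rintro ⟨i, d, hd⟩ hh
        simp only [σ, Sum.elim_inl, lft, Prod.mk.injEq, add_eq_left] at hh
        obtain ⟨u, hu⟩ := hlab f _ (hπ2 (t d) i f)
        rw [← hu] at hh
        exact hd (by simpa using hh.1)
      have hno2 : ∀ w e, x ≠ e → ¬ σ (.inr (.inl (w, e))) (x, f) = (x, g) := by
        intro w e hx hh
        obtain ⟨h, s, hh0, -, -, he⟩ := hbas w e x f hx
        simp only [σ, Sum.elim_inl, Sum.elim_inr, he, Prod.mk.injEq, add_eq_left] at hh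
        exact hh0 (((hPu w.1 (f, s)).mul_right_eq_zero).1 hh.1)
      rcases i with w | k
      · refine ⟨.inr (.inl (w, x)), by simp [σ, bas, hi], ?_⟩
        rintro (q | ⟨w', e⟩ | k) hh
        · exact absurd hh (hno1 q)
        · by_cases hx : x = e
          · subst hx
            simp only [σ, Sum.elim_inl, Sum.elim_inr, bas, if_true, Prod.mk.injEq, true_and] at hh
            have := hu _ hh
            simp only [Sum.inl.injEq] at this
            rw [this]
          · exact absurd hh (hno2 _ _ hx)
        · simp only [σ, Sum.elim_inr, Prod.mk.injEq, true_and] at hh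
          have := hu _ hh
          simp at this
      · refine ⟨.inr (.inr k), by simp [σ, hi], ?_⟩
        rintro (q | ⟨w', e⟩ | k') hh
        · exact absurd hh (hno1 q)
        · by_cases hx : x = e
          · subst hx
            simp only [σ, Sum.elim_inl, Sum.elim_inr, bas, if_true, Prod.mk.injEq, true_and] at hh
            have := hu _ hh
            simp at this
          · exact absurd hh (hno2 _ _ hx)
        · simp only [σ, Sum.elim_inr, Prod.mk.injEq, true_and] at hh
          have := hu _ hh
          simp only [Sum.inr.injEq] at this
          rw [this]
    · have hyx : y - x ≠ 0 := sub_ne_zero.2 (Ne.symm hxy)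
      by_cases hR : R f g
      · obtain ⟨u, hu⟩ := hlab f g hR
        have hd0 : (↑u⁻¹ * (y - x) : A) ≠ 0 := by simpa using hyx
        obtain ⟨i, hi, hiu⟩ := hπ3 (t (↑u⁻¹ * (y - x))) f g hR
        refine ⟨.inl (i, ⟨↑u⁻¹ * (y - x), hd0⟩), ?_, ?_⟩
        · simp [σ, lft, hi, ← hu]
        · rintro (⟨i', d, hd⟩ | ⟨w, e⟩ | k) hh
          · simp only [σ, Sum.elim_inl, lft, Prod.mk.injEq] at hh
            obtain ⟨h1, h2⟩ := hh
            rw [h2, ← hu] at h1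
            have : d = ↑u⁻¹ * (y - x) := by rw [← h1]; simp
            subst this
            rw [hiu i' h2]
          · exfalso
            by_cases hx : x = e
            · subst hx
              simp only [σ, Sum.elim_inl, Sum.elim_inr, bas, if_true, Prod.mk.injEq] at hh
              exact hxy hh.1
            · obtain ⟨h, s, -, -, -, he⟩ := hbas w e x f hx
              simp only [σ, Sum.elim_inl, Sum.elim_inr, he, Prod.mk.injEq] at hh
              exact hP2 w.1 (f, s) (by rw [hh.2]; exact hR)
          · simp only [σ, Sum.elim_inr, Prod.mk.injEq] at hh
            exact absurd hh.1 hxy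
      · obtain ⟨⟨i, s⟩, hi, hiu⟩ := hP3 f g hR
        simp only at hi
        obtain ⟨u, hu⟩ := hPu i (f, s)
        have hh0 : (↑u⁻¹ * (y - x) : A) ≠ 0 := by simpa using hyx
        refine ⟨.inr (.inl ((i, sg (↑u⁻¹ * (y - x))),
          x - sv s * c i f * (↑u⁻¹ * (y - x)))), ?_, ?_⟩
        · simp only [σ, Sum.elim_inl, Sum.elim_inr]
          have hp : (x, f) = pnt (c i) (x - sv s * c i f * (↑u⁻¹ * (y - x)))
              (↑u⁻¹ * (y - x)) (f, s) := by simp [pnt]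
          rw [hp, bas_pnt sg hsg _ _ _ _ _ hh0]
          simp only [pnt, hi, Prod.mk.injEq, and_true]
          rw [hi] at hu
          simp only at hu
          linear_combination (y - x) * u.mul_inv - (↑u⁻¹ * (y - x)) * hu
        · rintro (⟨i', d, hd⟩ | ⟨⟨i', ε⟩, e⟩ | k) hh
          · exfalso
            simp only [σ, Sum.elim_inl, lft, Prod.mk.injEq] at hh
            exact hR (hh.2 ▸ hπ2 (t d) i' f)
          · by_cases hx : x = e
            · subst hx
              simp only [σ, Sum.elim_inl, Sum.elim_inr, bas, if_true, Prod.mk.injEq] at hh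
              exact absurd hh.1 hxy
            · obtain ⟨h, s', h0, hsgh, hxe, he⟩ := hbas (i', ε) e x f hx
              simp only [σ, Sum.elim_inl, Sum.elim_inr, he, Prod.mk.injEq] at hh
              have := hiu (i', s') hh.2
              simp only [Prod.mk.injEq] at this
              obtain ⟨rfl, rfl⟩ := this
              have h1 := hh.1
              simp only at hu
              rw [← hu] at h1
              have hval : h = ↑u⁻¹ * (y - x) := by rw [← h1]; simp
              subst hval
              simp only at hsgh hxe
              rw [hsgh]
              congr 3
              rw [eq_sub_iff_add_eq]; exact hxe.symm
          · simp only [σ, Sum.elim_inr, Prod.mk.injEq] at hh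
            exact absurd hh.1 hxy
  · rw [← hr, Fintype.card_congr (Equiv.subtypeSum), Fintype.card_sum,
      Fintype.card_congr (Equiv.subtypeSum (α := (Fin 2 × Bool) × A)), Fintype.card_sum]
    congr 1
    · refine Eq.trans (Fintype.card_congr (β := Fin N × {d : A // d ≠ 0 ∧ t d = true}) ?_) (by simp)
      exact ⟨fun q => (q.1.1, ⟨q.1.2.1, q.1.2.2, q.2⟩),
        fun q => ⟨(q.1, ⟨q.2.1, q.2.2.1⟩), q.2.2.2⟩, fun _ => rfl, fun _ => rfl⟩
    · congr 1
      simp [β]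
  · rw [← hs, Fintype.card_congr (Equiv.subtypeSum), Fintype.card_sum,
      Fintype.card_congr (Equiv.subtypeSum (α := (Fin 2 × Bool) × A)), Fintype.card_sum]
    congr 1
    · refine Eq.trans (Fintype.card_congr (β := Fin N × {d : A // d ≠ 0 ∧ ¬ t d = true}) ?_) (by simp)
      exact ⟨fun q => (q.1.1, ⟨q.1.2.1, q.1.2.2, q.2⟩),
        fun q => ⟨(q.1, ⟨q.2.1, q.2.2.1⟩), q.2.2.2⟩, fun _ => rfl, fun _ => rfl⟩
    · simp [β]
end HW

namespace HW
open Function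

def PerOK {F : Type} [DecidableEq F] (m : ℕ) (π : F → F) (f : F) : Bool :=
  decide (π^[m] f = f) && decide (π f ≠ f) &&
    (m != 15 || (decide (π^[3] f ≠ f) && decide (π^[5] f ≠ f)))

theorem PerOK.period {F : Type} [DecidableEq F] {m : ℕ} (hm : m = 3 ∨ m = 5 ∨ m = 15)
    {π : F → F} {f : F} (h : PerOK m π f = true) : minimalPeriod π f = m := by
  simp only [PerOK, Bool.and_eq_true, decide_eq_true_eq, Bool.or_eq_true, bne_iff_ne] at h
  obtain ⟨⟨h1, h2⟩, h3⟩ := h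
  have hd : minimalPeriod π f ∣ m := IsPeriodicPt.minimalPeriod_dvd h1
  have hp := isPeriodicPt_minimalPeriod π f
  have n1 : minimalPeriod π f ≠ 1 := by
    intro h; rw [h] at hp; exact h2 hp
  rcases hm with rfl | rfl | rfl
  · exact ((Nat.dvd_prime (by norm_num)).1 hd).resolve_left n1
  · exact ((Nat.dvd_prime (by norm_num)).1 hd).resolve_left n1
  · have h3 := h3.resolve_left (by simp)
    have n3 : minimalPeriod π f ≠ 3 := by
      intro h; rw [h] at hp; exact h3.1 hp
    have n5 : minimalPeriod π f ≠ 5 := by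
      intro h; rw [h] at hp; exact h3.2 hp
    have hle := Nat.le_of_dvd (by norm_num) hd
    generalize minimalPeriod π f = k at *
    interval_cases k <;> omega

theorem PerOK_ne {F : Type} [DecidableEq F] {m : ℕ} {π : F → F} {f : F}
    (h : PerOK m π f = true) : π f ≠ f := by
  simp only [PerOK, Bool.and_eq_true, decide_eq_true_eq] at h
  exact h.1.2

theorem uniq {I F : Type} [Fintype I] [Fintype F] (σ : I → F → F) (D : F → F → Prop)
    [DecidableRel D] (f : F) (h1 : ∀ i, D f (σ i f)) (h2 : ∀ g, D f g → ∃ i, σ i f = g)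
    (hc : Fintype.card I = Fintype.card {g // D f g}) (g : F) (hg : D f g) :
    ∃! i, σ i f = g := by
  let φ : I → {g // D f g} := fun i => ⟨σ i f, h1 i⟩
  have hb : Bijective φ := by
    rw [Fintype.bijective_iff_surjective_and_card]
    refine ⟨fun y => ?_, hc⟩
    obtain ⟨i, hi⟩ := h2 y.1 y.2
    exact ⟨i, Subtype.ext hi⟩
  obtain ⟨i, hi, hu⟩ := hb.existsUnique ⟨g, hg⟩
  exact ⟨i, congrArg Subtype.val hi, fun j hj => hu j (Subtype.ext hj)⟩

/-- decoding a table of maps on fifteen points -/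
def tb (p : ℕ) (j : ℕ) (f : Fin 15) : Fin 15 := Fin.ofNat 15 (p / 16 ^ (15 * j + f.val) % 16)

def ok15 (m n a p : ℕ) : Bool :=
  decide (∀ j : Fin 14, ∀ f, PerOK (bif decide (j.val < a) then m else n) (tb p j) f = true) &&
  decide (∀ f g : Fin 15, f ≠ g → ∃ j : Fin 14, tb p j f = g)

theorem good15 {m n a p : ℕ} (hm : m = 3 ∨ m = 5 ∨ m = 15) (hn : n = 3 ∨ n = 5 ∨ n = 15)
    (ha : a < 15) (h : ok15 m n a p = true) : Good (Fin 15) m n a (14 - a) := by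
  simp only [ok15, Bool.and_eq_true, decide_eq_true_eq] at h
  obtain ⟨h1, h2⟩ := h
  have hper : ∀ (j : Fin 14) f, minimalPeriod (tb p j) f = bif decide (j.val < a) then m else n := by
    intro j f
    apply PerOK.period _ (h1 j f)
    cases decide (j.val < a) <;> simpa
  refine Good.ofBool (I := Fin 14) (fun j => decide (j.val < a)) (fun j => tb p j) hper ?_ ?_ ?_
  · intro f g hfg
    refine uniq (fun (j : Fin 14) => tb p j) (fun f g => f ≠ g) f ?_ (h2 f) ?_ g hfg
    · intro j hj
      exact PerOK_ne (h1 j f) hj.symm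
    · have := Fintype.card_subtype_compl (fun g => f = g)
      simp at this ⊢
  · clear h1 h2 hper
    interval_cases a <;> decide +kernel
  · clear h1 h2 hper
    interval_cases a <;> decide +kernel

def tabA : List ℕ := [
  2102962289280449052371350120664853262899292265434576588550024968030301570775304744573441490916866403694718867914923752537840834274772500971846584819129186061863184061094435391819496345737653159058657493133439928759611805505155242581879801219344276893745,
  5833256340644663864880114186461582094082251464365694192261679892964284846352924451824418314527156933222776350913588136633368519824182564726082939742108917607679924939095915126040479812424490160782442441008966367462514714354039957854969381325536452459245,
  5353436166937737402129396577144144348516000013594682810790360264104513790719456236559743449758542238595327839321860825153754374296967582390398244845665240338200599451127014697097846976966702112661767581960421062512837937558798364572727721351445385606745,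
  5353435837371438353463384373647185762278275577478828745540801402053240947456115164819247578000294797076299399968003345142751955517986689486235825415456952893760566584292957757633216418356025790952772760794956395076902591372641639538223038840279516276120,
  859422033787102558632747790662576839236547368259414737058931635031733427715524445204619821456532258274292874412525005545232129466704428706725969286797144805155075697781240865628134461046551493911092084548326556607917260773527179333679430646316883819245,
  5833256670211721234269733578383280201996962148018353351626092568170952770323559016767512641940744433340160091603523005266501625106316643283197991651636711221569390849956915099777207458736359745029146440628942641344376699400074694701202078131874861446745,
  5007860196216500622485708838941985261531929074692892531973280803946407784750746605094985882448058216774176346941377060972511019875184024776149583089775974789147619962822089005410051130980568966840547509790826055330609218966035901640876322747379156958620,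
  1719359581169717131881749473311237678626382324790274711050136838373287404067182852119705404152918870872095255348542163414888676761448753887782345432848201460514804978412092383096167370930080229562799929665376757730754109001032383337583535203922819961245,
  5353437090125530351676188941691027615321897129081362829816979489719798038378910530456409854636664988377148744324274989077918415327806945404221572986809115597805524181635356840317038080126862116114491324510669675228035525229267227732617838612001966305495,
  4906427494332994303072357178046145764218645829488454468118616546766239750279531374712566989889732582050379583966864959265571717510898226585604710301504179203464538940411432336741403585040474314633409785506613087003630871441818335216233762436967307601745,
  5833257127803331271301749703912427847529820164271011859192918681484179625347576742986078337643529806101026731725066244554696488556006613260373987596548914787005087815068925839180276729120657190482226161049293669938225356722041318160206335293951849294245,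
  6321468400553030267466931913040737621174815826580723401873401716016281499183231655208909123967432087044081953345159192728239711522860687343556163487546799033516677935216441605703759596430863559534621139073647280691535395931295112410294290591772269062370,
  6321468400553030267050754364297798592968719417138282205308549307833324462911276795575332479654438519089032253206765690534782195256167703709545664703330991781123309452827147732938643526187338731558503091328143027965907904790093623277190350879384369911745,
  5833257127804211689369661754939053363031966445231136845009281119860868926089462736426829626045391777146752709327756570024297823950751729974515093588808714269213560317283715689108581243279042206358283452887911955610126712320521956586461980447218080081745,
  5571309428346894773457674898055117339640716837210917605143156049026530566716734726733685755074868968832833294139264249108203179338747657674490920424181197255960669086356386478473784985515512586155038041612218128045872104328705665910803510236887894001870]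

theorem tabA_ok : ∀ a : Fin 15, ok15 3 5 a (tabA.getD a 0) = true := by
  decide +kernel

def tabC : List ℕ := [
  3437404922303012693673182877154213644990274121142521555713971388189407030281986160172690093996417230414669475654941368041768932024917445792178513820904911327473559064195632293688505446739367486508465445228612317233028064359365698928938469921510153076995,
  3671837882300446537815233948588679743708571999532049219916000020998664427232853211665003226268412707519571177667810713312201445739449433409505281032014181719212170678597910355041437300441285708779263506549302600891275786282313404339843934273529740148995,
  3790022191535056968004391538946365253955766990728254212370684236088986138851206692634980643870068054420200190698526695271145425604128628468030338681268235021377727077086663255286418696985514788563535119121749135216851754882753011190880566284626459508995,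
  3838658040363041395532408096614094890355850039899657377032794505290838507083084036804073002236938678543709196980984246128191661522301556679461232601422928834326343200713451242959396049148532379739187714866598547588337965931584409509446565381729713012995,
  2950766808860705063772446233849363309113244954771907946114533984154775282815984919483726037430334308197239614206250256612229278282417437748468804996896298240329736986278788660689562544771213806047929030006895164497055638651483011980400193346368207732995,
  4325405410916184650918532259387376067089708272448111487281191079665223241486299477416269936265386117839226362022182938815612232216301880387903859811623633935093172732444189920413314769601780531608030403038460317632121019940507435559102480323693280116995,
  2508422172462641205667385548767217654281753693052476579418395089905863765055394702212584747893935439261473535440167953637314067295410551985137498228176917136269434802019766731696844795184233186635568516471548896089032962949522336742040864860713024372995,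
  2506639207282513436962912783012372981774097482791550001230748559092013801326970969955747743393443730461773052891261093708863371685391338163641064231051421587182816882429459877842419668119876582930489926405836751559771359836378133716651255142781320052995,
  1104446871161151712078666425707071657326108423466886583426055003847357371564492041873107913967959244842809692776928577642577792846573649129412454652007658926540300729314637003917933630321928126183751196986242412462963469329389422378961279646442748788995,
  2422505804828485381354918129307862425983182468446425421944080013450648457648075704370883002153037054684456914271111031344655413012221689897760399840853905856115293707255978458309509584905928991761552310071658687865597940230902280551616851408673864564995,
  3853751945322971885874748004345666938828978368170004528774421320767313820503021136935451945838161269120134354115376783994166107263381325388818843871011716636837227022367144622924315916827970487609417431931314884552344522703758019979731771198025005940995,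
  3764925189973840648401667484025859826310147674558847519028243821929915806022628659200496133764374161303031918090572146286442554530178579918922350848220779096573445231515954325692058921950176628200139336941047900243214405980851609112320019080944843636995,
  2878273803211102516610618870868254084229136335775732936405607843714070061928648269769473536381187019952209966271808946620513656555124594398590567082440553696417571414539089151005055161453168256869726549063387591799978819469546549978657013245911530356995,
  945558782659814750615617993259313291298190444688800506762089808773680602250616625427893183117968740781262672411632853679105690593829547908500321107794543807488901228897282131529346117016508230438487165520173856679303376946569284003194656019857189235495,
  2102962289280449052371350120664853262899292265434576588550024968030301570775304744573441490916866403694718867914923752537840834274772500971846584819129186061863184061094435391819496345737653159058657493133439928759611805505155242581879801219344276893745]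

theorem tabC_ok : ∀ a : Fin 15, ok15 5 15 a (tabC.getD a 0) = true := by
  decide +kernel

def tabB : List ℕ := [
  3437404922303012693673182877154213644990274121142521555713971388189407030281986160172690093996417230414669475654941368041768932024917445792178513820904911327473559064195632293688505446739367486508465445228612317233028064359365698928938469921510153076995,
  3877014904474970132356043471064882557994188020385211168852014360879002995065414234276708850975130989630203349415975023469728735035682485645190151654641276879363290165762187292815594203658346624362929216865350193993571021313572003111262676957988433236995,
  2094892540789345747000640960657272679067838057334360475726992424153607029913602110286677052327383646837865133992802008170427526604235073968318996186841864509651160702732869363642543939484720116784220265497208431451830524495069786427667073083139730772995,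
  1041797631966969733004629832474782073042918636179868920216851704598555330669744502303809912210155806928400027950213373441887837428086026458544957177431829538901007025117489894218818445554358449296518896221746345916143450036124016982116521560398409044995,
  2067422712336816126775966532231281837884294679411730538089562525067023012467209483030380657114147460462339821297443323321384327136023344177565417611949676242981886698196481165578735959796062351355404423884661759685706328452349458056637383815470296404995,
  2420674164903306187641122624403890261861969731119700263193830634789989399068197154161036721307401260864422418747371233349877707619774552536738689571996606930771374315753601534326392873250003826171717115759089467245083486689514007810232496540382965076995,
  156215036009191481301125178712497682632949300901190919651077434878379347187217410946518857746704311679877251019934233115419434264191749682228608232296922889403200459392092558581334523277422880044772656340537831198711078166856078199291046215973645652995,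
  4301460169718357316576693484658617970779465583452242646095012002496049786040214420785759586152427076008684242196784983134453705111576188258715257765608047858536712284678299707474496120517381968966411746308862977841138436191679610448866407481147960660995,
  4192358389729251079974316624241034789027167558726111271737986362594857415213463141843716652169614659166317354277957133416572286408112868415183913944739407595544693516168579351691442217196608021785518168813650638171694232030896495576044372192962587988995,
  2101942063074117632344525300815265815165451320698558648964343175069378640282897983239663561525134212623618602585174782828004108444942994968492213004901208876299638097861508239652206030305043159846600638050137155530166714237378778621990262144106540372995,
  2103589905461869220906630874745138182126467496129329624574055701719650684415740627271726536885792100881765744607952414134523719111094421674911484952846068782330728813031153466099006870296987126723214225869018264726438671232850876143792389340452138324995,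
  1560840493951554599451395102271595426150808815459593541752059139177057737800089562624109706602008596763144345241596775142015840120887685373452629609433091972720378317450702318386432011718675021913409773978391562568553930503340961769776794203208068436995,
  5220874548734564691917036907163834525858961377263833185187083651424669004351171681702234614985273791819167799946379311511621725339847717796189837699374152723673669734904060305515939194142586789393616258993011936927351375538660742498931077312442260788995,
  1927987330483079692956468559326233228725364030080918122181226208213629451467957969525852882853937801036049734507045697993506380276804524541864608338599563178798908703443016522442749571145123576787891249070666227348017429339772595409901309330412105976370,
  5571309428346894773457674898055117339640716837210917605143156049026530566716734726733685755074868968832833294139264249108203179338747657674490920424181197255960669086356386478473784985515512586155038041612218128045872104328705665910803510236887894001870]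

theorem tabB_ok : ∀ a : Fin 15, ok15 3 15 a (tabB.getD a 0) = true := by
  decide +kernel

def labT : ℕ :=
  330889168944390683799845469423239747893551411842575205576038737717217654949738391345083899900436588089171739891090486468666097921610940937754324436675716251008548889487419481683899459251215995632767949965828963597578041365462802882682677707399325932791624265629334611200

def tabR3 : ℕ :=
  4093678450171234223376282324754249352609868471301959756774125308802015163427316470793593708613689527921886877964799725046206322891114720979342367996596260111801385630368540900099005349606837987067850

def tabP3 : ℕ :=
  1650743809560446835134358917651191217751391971840884827472598859974503571432152671335878561

def tabW3 : ℕ :=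
  224824507

def tabR5 : ℕ :=
  3253425135281419464803988725823032728234455722121349786338549193086259086396639691210712540515519443313963171583810992213330469009128515683674958377426041240494215856906872218063272997061413745571850

def tabP5 : ℕ :=
  1595062285529370882791813107089044952755070786962778922522003306823960740087320479933828122

def tabW5 : ℕ :=
  912723227

def tabR15 : ℕ :=
  1962731517743429780073177830636795690319874065795099704690577769158003201488822449051023273943669464646282952056314351925077403996801923768810695569160429116482002206151012500685107211685179263619850

def tabP15 : ℕ :=
  47826977636098608803376311806604063578420453805094181963986600940931909179778244979854401

def tabW15 : ℕ :=
  232166271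

def tabK3 : ℕ :=
  2464242140146003863668189107950976771962302475161496127402846230126555862991180653195606181392231006548259957552004780188810946815029832626839437112883403311124559320899138177566550

def tabL3 : ℕ :=
  1358022690375153095412676242085950323243226855406176053991115363928679318605576917203200000

def tabK5 : ℕ :=
  1303324781703145570015543584283122220573509656338101650793568002403486723813865712242090811668414125063067013195427152977647173378079187022100837965031545492352784338185863829431925

def tabL5 : ℕ :=
  1228221628739350752767562686428522890194568493438782781284460545916665807895889827592579616

def tabK15 : ℕ :=
  2449109324118252662054652010702121650396880733821484912712473842978443712825795380545149145198892941010814969419104521454790987425552805374698549659452296866004398003468251384350550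

def tabL15 : ℕ :=
  1347549071342474650751806235938314020451095299921278722128546682219339110417544102251488616

def tabKa : ℕ :=
  672935378664852918860492781193514397566388412979253031449205087939342895013647800138998603406568737143902384701267746967904632701378318973035008721131383062099575556507375026222550

def tabLa : ℕ :=
  1348068758512931786091188614051642624963222461534805780302304731498229807162739015321036800

def tabKb : ℕ :=
  153385183260261712505455915959971799566823435677488478493104101409336009637199566845733711815053110903060213979570132447433329347773520049640504832800737485901599034644059474462550

def tabLb : ℕ :=
  721317528632958987079971022708755486536977219216432325225945350479781708687660717036972032

def tabKc : ℕ :=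
  1559584901465826890556274474506140565345197569128645118537709812304960909895692672923575746922895877935181699759366637958849659225729948931380077850177067259089539996394527468062550

def tabLc : ℕ :=
  1228711553139707202593052204713861538932716660385216722965221904335610988900981185842947592


def lb (f g : Fin 15) : ℕ := labT / 16 ^ (15 * f.val + g.val) % 16

def lab (f g : Fin 15) : ℤ := (lb f g : ℤ) - 8

def RR (f g : Fin 15) : Prop := lb f g ≠ 0

instance : DecidableRel RR := fun f g => inferInstanceAs (Decidable (lb f g ≠ 0))

def sml (z : ℤ) : Bool := decide (1 ≤ z.natAbs ∧ z.natAbs ≤ 4)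

def okR (m p : ℕ) : Bool :=
  decide (∀ j : Fin 11, ∀ f, PerOK m (tb p j) f = true ∧
    csum (tb p j) (fun f => lab f (tb p j f)) m f = 0 ∧ RR f (tb p j f)) &&
  decide (∀ f g : Fin 15, RR f g → ∃ j : Fin 11, tb p j f = g)

theorem lab_ok : ∀ f g, RR f g → sml (lab f g) = true := by decide +kernel

theorem card_RR : ∀ f, Fintype.card (Fin 11) = Fintype.card {g // RR f g} := by decide +kernel

theorem card_nRR : ∀ f, Fintype.card (Fin 2 × Bool) = Fintype.card {g // ¬ RR f g} := by
  decide +kernel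

theorem exR (m : ℕ) (hm : m = 3 ∨ m = 5 ∨ m = 15) : ∃ π : Fin 11 → Fin 15 → Fin 15,
    (∀ i f, minimalPeriod (π i) f = m) ∧
    (∀ i f, csum (π i) (fun f => lab f (π i f)) m f = 0) ∧ (∀ i f, RR f (π i f)) ∧
    (∀ f g, RR f g → ∃! i, π i f = g) := by
  have key : ∃ p, okR m p = true := by
    rcases hm with rfl | rfl | rfl
    · exact ⟨tabR3, by decide +kernel⟩
    · exact ⟨tabR5, by decide +kernel⟩
    · exact ⟨tabR15, by decide +kernel⟩
  obtain ⟨p, h⟩ := key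
  simp only [okR, Bool.and_eq_true, decide_eq_true_eq] at h
  obtain ⟨h1, h2⟩ := h
  exact ⟨fun j => tb p j, fun i f => PerOK.period hm (h1 i f).1, fun i f => (h1 i f).2.1,
    fun i f => (h1 i f).2.2,
    fun f g hg => uniq (fun j : Fin 11 => tb p j) RR f (fun i => (h1 i f).2.2) (h2 f) (card_RR f) g hg⟩

def pd (p : ℕ) (i : Fin 2) (q : Fin 15 × Bool) : Fin 15 × Bool :=
  (Fin.ofNat 15 (p / 32 ^ (30 * i.val + 2 * q.1.val + q.2.toNat) % 32 / 2),
    p / 32 ^ (30 * i.val + 2 * q.1.val + q.2.toNat) % 2 == 1)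

def cb (w : ℕ) (i : Fin 2) (f : Fin 15) : Bool := w / 2 ^ (15 * i.val + f.val) % 2 == 1

def cz (b : Bool) : ℤ := bif b then 2 else 1

def okP (m p w : ℕ) : Bool :=
  decide (∀ i q, PerOK m (pd p i) q = true ∧ ¬ RR q.1 (pd p i q).1 ∧
    sml ((bif (pd p i q).2 then -1 else 1) * cz (cb w i (pd p i q).1) -
      (bif q.2 then -1 else 1) * cz (cb w i q.1)) = true) &&
  decide (∀ f g : Fin 15, ¬ RR f g → ∃ v : Fin 2 × Bool, (pd p v.1 (f, v.2)).1 = g)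

theorem exP (m : ℕ) (hm : m = 3 ∨ m = 5 ∨ m = 15) :
    ∃ (P : Fin 2 → Fin 15 × Bool → Fin 15 × Bool) (c : Fin 2 → Fin 15 → Bool),
    (∀ i q, minimalPeriod (P i) q = m) ∧
    (∀ i q, sml ((bif (P i q).2 then -1 else 1) * cz (c i (P i q).1) -
      (bif q.2 then -1 else 1) * cz (c i q.1)) = true) ∧
    (∀ i q, ¬ RR q.1 (P i q).1) ∧
    (∀ f g, ¬ RR f g → ∃! w : Fin 2 × Bool, (P w.1 (f, w.2)).1 = g) := by
  have key : ∃ p w, okP m p w = true := by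
    rcases hm with rfl | rfl | rfl
    · exact ⟨tabP3, tabW3, by decide +kernel⟩
    · exact ⟨tabP5, tabW5, by decide +kernel⟩
    · exact ⟨tabP15, tabW15, by decide +kernel⟩
  obtain ⟨p, w, h⟩ := key
  simp only [okP, Bool.and_eq_true, decide_eq_true_eq] at h
  obtain ⟨h1, h2⟩ := h
  exact ⟨pd p, cb w, fun i q => PerOK.period hm (h1 i q).1, fun i q => (h1 i q).2.2,
    fun i q => (h1 i q).2.1,
    fun f g hg => uniq (fun (v : Fin 2 × Bool) f => (pd p v.1 (f, v.2)).1) (fun f g => ¬ RR f g) f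
      (fun v => (h1 v.1 (f, v.2)).2.1) (h2 f) (card_nRR f) g hg⟩

/-- group of a point -/
def grp (f : Fin 15) : ℕ := f.val / 5

/-- labels for the multipartite tables -/
def lk (q : ℕ) (j : ℕ) (f : Fin 15) : ℤ :=
  bif q / 4 ^ (15 * j + f.val) % 4 < 2 then (q / 4 ^ (15 * j + f.val) % 4 : ℕ) - 2
  else (q / 4 ^ (15 * j + f.val) % 4 : ℕ) - 1

def okK (m n a p q : ℕ) : Bool :=
  decide (∀ j : Fin 10, ∀ f, PerOK (bif decide (j.val < a) then m else n) (tb p j) f = true ∧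
    csum (tb p j) (lk q j) (bif decide (j.val < a) then m else n) f = 0 ∧
    (1 ≤ (lk q j f).natAbs ∧ (lk q j f).natAbs ≤ 2) ∧ grp f ≠ grp (tb p j f)) &&
  decide (∀ f g : Fin 15, grp f ≠ grp g → ∃ j : Fin 10, tb p j f = g)

theorem card_grp : ∀ f, Fintype.card (Fin 10) = Fintype.card {g // grp f ≠ grp g} := by
  decide +kernel

def ConK (m n a : ℕ) : Prop :=
  ∃ (π : Fin 10 → Fin 15 → Fin 15) (b : Fin 10 → Bool) (l : Fin 10 → Fin 15 → ℤ),
    Fintype.card {i // b i = true} = a ∧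
    (∀ i f, minimalPeriod (π i) f = bif b i then m else n) ∧
    (∀ i f, csum (π i) (l i) (bif b i then m else n) f = 0) ∧
    (∀ i f, 1 ≤ (l i f).natAbs ∧ (l i f).natAbs ≤ 2) ∧
    (∀ i f, grp f ≠ grp (π i f)) ∧
    (∀ f g, grp f ≠ grp g → ∃! i, π i f = g)

theorem conK_of {m n a p q : ℕ} (hm : m = 3 ∨ m = 5 ∨ m = 15) (hn : n = 3 ∨ n = 5 ∨ n = 15)
    (ha : a ≤ 10) (h : okK m n a p q = true) : ConK m n a := by
  simp only [okK, Bool.and_eq_true, decide_eq_true_eq] at h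
  obtain ⟨h1, h2⟩ := h
  refine ⟨fun j => tb p j, fun j => decide (j.val < a), fun j => lk q j, ?_, ?_,
    fun i f => (h1 i f).2.1, fun i f => (h1 i f).2.2.1, fun i f => (h1 i f).2.2.2, ?_⟩
  · clear h1 h2
    interval_cases a <;> decide +kernel
  · intro j f
    apply PerOK.period _ (h1 j f).1
    cases decide (j.val < a) <;> simpa
  · exact fun f g hg => uniq (fun j : Fin 10 => tb p j) (fun f g => grp f ≠ grp g) f
      (fun i => (h1 i f).2.2.2) (h2 f) (card_grp f) g hg

theorem exK (m n : ℕ) (hmn : (m, n) = (3, 5) ∨ (m, n) = (3, 15) ∨ (m, n) = (5, 15)) :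
    ConK m n 0 ∧ ConK m n 5 ∧ ConK m n 10 := by
  rcases hmn with h | h | h <;> simp only [Prod.mk.injEq] at h <;> obtain ⟨rfl, rfl⟩ := h
  · exact ⟨conK_of (p := tabK5) (q := tabL5) (by simp) (by simp) (by simp) (by decide +kernel),
      conK_of (p := tabKa) (q := tabLa) (by simp) (by simp) (by simp) (by decide +kernel),
      conK_of (p := tabK3) (q := tabL3) (by simp) (by simp) (by simp) (by decide +kernel)⟩
  · exact ⟨conK_of (p := tabK15) (q := tabL15) (by simp) (by simp) (by simp) (by decide +kernel),
      conK_of (p := tabKb) (q := tabLb) (by simp) (by simp) (by simp) (by decide +kernel),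
      conK_of (p := tabK3) (q := tabL3) (by simp) (by simp) (by simp) (by decide +kernel)⟩
  · exact ⟨conK_of (p := tabK15) (q := tabL15) (by simp) (by simp) (by simp) (by decide +kernel),
      conK_of (p := tabKc) (q := tabLc) (by simp) (by simp) (by simp) (by decide +kernel),
      conK_of (p := tabK5) (q := tabL5) (by simp) (by simp) (by simp) (by decide +kernel)⟩


theorem unit_of_natAbs {k : ℕ} {z : ℤ} (h : z.natAbs.Coprime k) : IsUnit ((z : ℤ) : ZMod k) := by
  have h1 := (ZMod.isUnit_iff_coprime z.natAbs k).2 h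
  rcases Int.natAbs_eq z with hz | hz
  · rw [hz]; simpa using h1
  · rw [hz]; simpa using h1

theorem unit_sml {k : ℕ} (hk : k.Coprime 6) {z : ℤ} (h : sml z = true) :
    IsUnit ((z : ℤ) : ZMod k) := by
  apply unit_of_natAbs
  simp only [sml, decide_eq_true_eq] at h
  generalize z.natAbs = a at h
  have h2 : Nat.Coprime 2 k := (hk.coprime_dvd_right (by norm_num)).symm
  have h3 : Nat.Coprime 3 k := (hk.coprime_dvd_right (by norm_num)).symm
  obtain ⟨h1, h4⟩ := h
  interval_cases a
  · simp
  · exact h2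
  · exact h3
  · exact Nat.Coprime.mul_left h2 h2

theorem sg_neg {k : ℕ} [NeZero k] (hk : Odd k) (z : ZMod k) (hz : z ≠ 0) :
    decide (k < 2 * (-z).val) = !decide (k < 2 * z.val) := by
  have h1 : (-z).val = k - z.val := by
    haveI : NeZero z := ⟨hz⟩
    exact ZMod.val_neg_of_ne_zero z
  have h2 := ZMod.val_lt z
  obtain ⟨w, hw⟩ := hk
  rw [h1, ← decide_not, decide_eq_decide]
  omega

theorem cop6 {k m n : ℕ} (hk0 : 0 < k) (hk : k.Coprime 6) (hm : m = 3 ∨ m = 5 ∨ m = 15)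
    (hn : n = 3 ∨ n = 5 ∨ n = 15) (hG : ∀ a, a < 15 → Good (Fin 15) m n a (14 - a))
    (r s : ℕ) (h4 : 4 * k ≤ r) (hrs : r + s = 15 * k - 1) : Good (ZMod k × Fin 15) m n r s := by
  classical
  haveI : NeZero k := ⟨hk0.ne'⟩
  have hodd : Odd k := by
    have := hk.coprime_dvd_right (show 2 ∣ 6 by norm_num)
    rwa [Nat.coprime_two_right] at this
  obtain ⟨j, a, ha, hj, hr⟩ : ∃ j a, a < 11 ∧ j ≤ k - 1 ∧ r = 4 * k + 11 * j + a :=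
    ⟨(r - 4 * k) / 11, (r - 4 * k) % 11, Nat.mod_lt _ (by norm_num), by omega, by omega⟩
  obtain ⟨σ, s1, s2, s3⟩ := hG (4 + a) (by omega)
  have hcA : Fintype.card (ZMod k) = k := ZMod.card k
  obtain ⟨J, hJ, hJc⟩ := Finset.exists_subset_card_eq
    (s := (Finset.univ : Finset (ZMod k)).erase 0) (n := j)
    (by rw [Finset.card_erase_of_mem (Finset.mem_univ _), Finset.card_univ, hcA]; exact hj)
  obtain ⟨πm, p1, p2, p3, p4⟩ := exR m hm
  obtain ⟨πn, q1, q2, q3, q4⟩ := exR n hn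
  obtain ⟨P, c, c1, c2, c3, c4⟩ := exP m hm
  have hu2 : IsUnit (2 : ZMod k) := by
    have := unit_sml hk (z := 2) (by decide)
    simpa using this
  obtain ⟨u2, hu⟩ := hu2
  have e4 : Fin 2 × Bool ≃ Fin 4 := Fintype.equivFinOfCardEq (by simp)
  let e : (Fin 2 × Bool) ⊕ (Fin a ⊕ Fin (14 - (4 + a))) ≃ Fin (4 + a) ⊕ Fin (14 - (4 + a)) :=
    (Equiv.sumAssoc _ _ _).symm.trans
      (Equiv.sumCongr ((Equiv.sumCongr e4 (Equiv.refl _)).trans finSumFinEquiv) (Equiv.refl _))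
  have hcz : ∀ b : Bool, ((bif b then u2 else 1 : (ZMod k)ˣ) : ZMod k) = (cz b : ℤ) := by
    intro b; cases b <;> simp [cz, hu]
  have hsv : ∀ b : Bool, (sv b : ZMod k) = ((bif b then -1 else 1 : ℤ) : ZMod k) := by
    intro b; cases b <;> simp [sv]
  have hne0 : ∀ d ∈ J, d ≠ 0 := fun d hd => Finset.ne_of_mem_erase (hJ hd)
  have hc1 : Fintype.card {d : ZMod k // d ≠ 0 ∧ decide (d ∈ J) = true} = j := by
    rw [Fintype.card_subtype, ← hJc]
    congr 1
    ext d
    simp only [decide_eq_true_eq, Finset.mem_filter, Finset.mem_univ, true_and]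
    exact ⟨fun h => h.2, fun h => ⟨hne0 d h, h⟩⟩
  have hc2 : Fintype.card {d : ZMod k // d ≠ 0 ∧ ¬ decide (d ∈ J) = true} = k - 1 - j := by
    have : (Finset.univ.filter fun d : ZMod k => d ≠ 0 ∧ ¬ decide (d ∈ J) = true) =
        (Finset.univ.erase 0) \ J := by
      ext d; simp
    rw [Fintype.card_subtype, this, Finset.card_sdiff_of_subset hJ, hJc,
      Finset.card_erase_of_mem (Finset.mem_univ _), Finset.card_univ, hcA]
  refine main_step (K := Fin a ⊕ Fin (14 - (4 + a))) (N := 11)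
    (fun z : ZMod k => decide (k < 2 * z.val)) (fun z hz => sg_neg hodd z hz) ⟨u2, hu⟩
    RR (fun i => σ (e i)) Sum.isLeft (fun q f => ?_) (fun q f => ?_) (fun f g hfg => ?_)
    (fun d => decide (d ∈ J)) lab (fun f g h => unit_sml hk (lab_ok f g h))
    (fun b => bif b then πm else πn) ?_ ?_ ?_ ?_ P (fun i f => bif c i f then u2 else 1) c1 ?_ c3 c4
    ?_ ?_
  · exact s1 _ f
  · rcases q with q | q
    · exact s1 _ f
    · exact s2 _ f
  · exact (e.bijective.existsUnique_iff (p := fun i => σ i f = g)).1 (s3 f g hfg)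
  · rintro (_ | _) i f
    · exact q1 i f
    · exact p1 i f
  · rintro (_ | _) i f
    · exact q2 i f
    · exact p2 i f
  · rintro (_ | _) i f
    · exact q3 i f
    · exact p3 i f
  · rintro (_ | _) f g hg
    · exact q4 f g hg
    · exact p4 f g hg
  · intro i q
    rw [hcz, hcz, hsv, hsv]
    have := unit_sml hk (c2 i q)
    push_cast at this ⊢
    exact this
  · rw [hc1, hcA]
    have : Fintype.card {q : Fin a ⊕ Fin (14 - (4 + a)) // q.isLeft = true} = a := by
      rw [Fintype.card_congr (Equiv.subtypeSum), Fintype.card_sum]; simp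
    rw [this]; omega
  · rw [hc2]
    have : Fintype.card {q : Fin a ⊕ Fin (14 - (4 + a)) // ¬ q.isLeft = true} = 14 - (4 + a) := by
      rw [Fintype.card_congr (Equiv.subtypeSum), Fintype.card_sum]; simp
    rw [this]; omega

theorem mul3 {w m n : ℕ} (hw : Odd w)
    (hmn : (m, n) = (3, 5) ∨ (m, n) = (3, 15) ∨ (m, n) = (5, 15))
    (ih : ∀ r s, r + s = 15 * w - 1 → Good (Fin (15 * w)) m n r s)
    (r s : ℕ) (hrs : r + s = 15 * (3 * w) - 1) : Good (Fin (15 * (3 * w))) m n r s := by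
  have hw0 := hw.pos
  haveI : NeZero (3 * w) := ⟨by omega⟩
  have hodd : Nat.Coprime 2 (3 * w) := Nat.coprime_two_left.2 (Odd.mul (by decide) hw)
  have hcA : Fintype.card (ZMod (3 * w)) = 3 * w := ZMod.card _
  have main : ∀ a r' s', ConK m n a → r' + s' = 15 * w - 1 → r = 3 * w * a + r' →
      s = 3 * w * (10 - a) + s' → Good (Fin (15 * (3 * w))) m n r s := by
    intro a r' s' hK hrs' hr hs
    obtain ⟨π, b, l, k1, k2, k3, k4, k5, k6⟩ := hK
    have eB : Fin (15 * w) ≃ ZMod (3 * w) × Fin 5 :=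
      Fintype.equivOfCardEq (by simp [hcA]; ring)
    have eV : ZMod (3 * w) × Fin 15 ≃ Fin (15 * (3 * w)) :=
      Fintype.equivOfCardEq (by simp [hcA]; ring)
    let E : Fin 15 ≃ Fin 3 × Fin 5 := (finProdFinEquiv (m := 3) (n := 5)).symm
    have hE : ∀ f g, (E f).1 ≠ (E g).1 ↔ grp f ≠ grp g := by decide +kernel
    have hgood := (blow (A := ZMod (3 * w)) E a π b l k1 k2 k3
      (fun i f => by
        apply unit_of_natAbs
        have := k4 i f
        generalize (l i f).natAbs = z at this
        obtain ⟨h1, h2⟩ := this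
        interval_cases z
        · simp
        · exact hodd)
      (fun i f => (hE _ _).2 (k5 i f)) (fun f g h => k6 f g ((hE _ _).1 h))
      ((ih r' s' hrs').congr eB)).congr eV
    rw [hcA] at hgood
    rw [hr, hs]; exact hgood
  obtain ⟨K0, K5, K10⟩ := exK m n hmn
  by_cases h1 : r < 15 * w
  · exact main 0 r (s - 30 * w) K0 (by omega) (by omega) (by omega)
  by_cases h2 : r < 30 * w
  · exact main 5 (r - 15 * w) (s - 15 * w) K5 (by omega) (by omega) (by omega)
  · exact main 10 (r - 30 * w) s K10 (by omega) (by omega) (by omega)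

theorem all15 (m n : ℕ) (hmn : (m, n) = (3, 5) ∨ (m, n) = (3, 15) ∨ (m, n) = (5, 15)) :
    ∀ a, a < 15 → Good (Fin 15) m n a (14 - a) := by
  intro a ha
  rcases hmn with h | h | h <;> simp only [Prod.mk.injEq] at h <;> obtain ⟨rfl, rfl⟩ := h
  · exact good15 (by simp) (by simp) ha (tabA_ok ⟨a, ha⟩)
  · exact good15 (by simp) (by simp) ha (tabB_ok ⟨a, ha⟩)
  · exact good15 (by simp) (by simp) ha (tabC_ok ⟨a, ha⟩)

theorem all_odd (m n : ℕ) (hmn : (m, n) = (3, 5) ∨ (m, n) = (3, 15) ∨ (m, n) = (5, 15)) (k : ℕ) :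
    Odd k → ∀ r s, r + s = 15 * k - 1 → Good (Fin (15 * k)) m n r s := by
  have hm : (m = 3 ∨ m = 5 ∨ m = 15) ∧ (n = 3 ∨ n = 5 ∨ n = 15) := by
    rcases hmn with h | h | h <;> simp only [Prod.mk.injEq] at h <;> obtain ⟨rfl, rfl⟩ := h <;> simp
  have h15 := all15 m n hmn
  induction k using Nat.strong_induction_on with
  | _ k ih =>
    intro hk r s hrs
    have hk0 := hk.pos
    by_cases h3 : 3 ∣ k
    · obtain ⟨w, rfl⟩ := h3
      have hw : Odd w := by
        rw [Nat.odd_mul] at hk; exact hk.2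
      exact mul3 hw hmn (ih w (by omega) hw) r s hrs
    · have h6 : k.Coprime 6 := by
        have h2 : k.Coprime 2 := Nat.coprime_two_right.2 hk
        have h3 : k.Coprime 3 := ((Nat.Prime.coprime_iff_not_dvd Nat.prime_three).2 h3).symm
        exact Nat.Coprime.mul_right h2 h3
      haveI : NeZero k := ⟨hk0.ne'⟩
      have eV : ZMod k × Fin 15 ≃ Fin (15 * k) :=
        Fintype.equivOfCardEq (by simp [ZMod.card]; ring)
      by_cases h4 : 4 * k ≤ r
      · exact (cop6 hk0 h6 hm.1 hm.2 h15 r s h4 hrs).congr eV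
      · refine ((cop6 hk0 h6 hm.2 hm.1 (fun a ha => ?_) s r (by omega) (by omega)).swap).congr eV
        have := (h15 (14 - a) (by omega)).swap
        rwa [show 14 - (14 - a) = a by omega] at this

end HW

/-- Theorem 4.3 (sufficiency): for odd v > 15 with 15 ∣ v and
(m, n) ∈ {(3,5), (3,15), (5,15)}, HWP*(v; m^r, n^s) has a solution whenever
r + s = v - 1. -/
theorem hwpStar_odd_main (v : ℕ) (hvodd : Odd v) (hv : 15 < v) (hdvd : 15 ∣ v)
    (m n : ℕ)
    (hmn : (m, n) = (3, 5) ∨ (m, n) = (3, 15) ∨ (m, n) = (5, 15)) :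
    ∀ r s : ℕ, r + s = v - 1 → HWPStarSolution v m n r s := by
  intro r s hrs
  obtain ⟨k, rfl⟩ := hdvd
  have hk : Odd k := by
    rw [Nat.odd_mul] at hvodd; exact hvodd.2
  have hpos : 0 < m ∧ 0 < n := by
    rcases hmn with h | h | h <;> simp only [Prod.mk.injEq] at h <;> obtain ⟨rfl, rfl⟩ := h <;> simp
  exact (HW.all_odd m n hmn k hk r s hrs).toHWP hpos.1 hpos.2
end
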